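/- arXiv:2605.19349 — 8 statements merged into one kernel-verified Lean document; each statement's English description precedes it below -/
import Mathlib

section
/- Let A be a GLD-lattice and let x, y ∈ A with x ≰ y. Then there exists a natural number n such that x ⊓ □ⁿ⊥ ≰ y ⊔ ◇ⁿ⊤ (where □ⁿ and ◇ⁿ denote n-fold iteration of □ and ◇). -/
/-!
As `□` and `◇` are monotone, `x ⊓ □ⁿ⊥` increases with `n` while `y ⊔ ◇ⁿ⊤` decreases. So if
`x ⊓ □ⁿ⊥ ≤ y ⊔ ◇ⁿ⊤` for every `n`, then every term of the first sequence lies below every term of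
the second, and passing to the supremum `x` and the infimum `y` gives `x ≤ y`.
-/

/-- A GLD-lattice structure on a bounded distributive lattice `A`, given by the
modal operations `box` and `dia`. -/
structure IsGLDLattice {A : Type*} [DistribLattice A] [BoundedOrder A]
    (box dia : A → A) : Prop where
  box_top : box ⊤ = ⊤
  dia_bot : dia ⊥ = ⊥
  box_sup_le : ∀ x y : A, box (x ⊔ y) ≤ box x ⊔ dia y
  inf_dia_le : ∀ x y : A, box x ⊓ dia y ≤ dia (x ⊓ y)
  dia_sup : ∀ x y : A, dia (x ⊔ y) = dia x ⊔ dia y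
  box_inf : ∀ x y : A, box (x ⊓ y) = box x ⊓ box y
  dia_dia_le : ∀ x : A, dia (dia x) ≤ dia x
  box_le_box_box : ∀ x : A, box x ≤ box (box x)
  isLUB_inf_boxIter : ∀ x : A, IsLUB {y : A | ∃ n : ℕ, y = x ⊓ box^[n] ⊥} x
  isGLB_sup_diaIter : ∀ x : A, IsGLB {y : A | ∃ n : ℕ, y = x ⊔ dia^[n] ⊤} x

theorem exists_not_le_of_isLUB_of_isGLB {ι α : Type*} [Preorder ι] [IsDirectedOrder ι] [Preorder α]
    {f g : ι → α} {x y : α} (hf : Monotone f) (hg : Antitone g)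
    (hx : IsLUB (Set.range f) x) (hy : IsGLB (Set.range g) y) (hxy : ¬ x ≤ y) :
    ∃ i, ¬ f i ≤ g i := by
  contrapose! hxy with hfg
  have forall_le : ∀ i j, f i ≤ g j := hf.forall_le_of_antitone hg hfg
  rw [isLUB_le_iff hx, mem_upperBounds, Set.forall_mem_range]
  intro i
  rw [le_isGLB_iff hy, mem_lowerBounds, Set.forall_mem_range]
  exact forall_le i

theorem monotone_inf_iterate_bot {α : Type*} [SemilatticeInf α] [OrderBot α] {f : α → α}
    (hf : Monotone f) (x : α) : Monotone fun n : ℕ => x ⊓ f^[n] ⊥ :=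
  monotone_const.inf (hf.monotone_iterate_of_le_map bot_le)

theorem antitone_sup_iterate_top {α : Type*} [SemilatticeSup α] [OrderTop α] {f : α → α}
    (hf : Monotone f) (x : α) : Antitone fun n : ℕ => x ⊔ f^[n] ⊤ :=
  antitone_const.sup (hf.antitone_iterate_of_map_le le_top)

namespace IsGLDLattice

variable {A : Type*} [DistribLattice A] [BoundedOrder A] {box dia : A → A}

theorem monotone_box (h : IsGLDLattice box dia) : Monotone box :=
  Monotone.of_map_inf h.box_inf

theorem monotone_dia (h : IsGLDLattice box dia) : Monotone dia :=
  Monotone.of_map_sup h.dia_sup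

theorem isLUB_range_inf_iterate_box (h : IsGLDLattice box dia) (x : A) :
    IsLUB (Set.range fun n : ℕ => x ⊓ box^[n] ⊥) x := by
  simpa only [Set.range, eq_comm] using h.isLUB_inf_boxIter x

theorem isGLB_range_sup_iterate_dia (h : IsGLDLattice box dia) (x : A) :
    IsGLB (Set.range fun n : ℕ => x ⊔ dia^[n] ⊤) x := by
  simpa only [Set.range, eq_comm] using h.isGLB_sup_diaIter x

end IsGLDLattice

theorem stmt0_general {A : Type*} [Lattice A] [BoundedOrder A] {box dia : A → A}
    (hbox : Monotone box) (hdia : Monotone dia) {x y : A}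
    (hx : IsLUB (Set.range fun n : ℕ => x ⊓ box^[n] ⊥) x)
    (hy : IsGLB (Set.range fun n : ℕ => y ⊔ dia^[n] ⊤) y) (hxy : ¬ x ≤ y) :
    ∃ n : ℕ, ¬ (x ⊓ box^[n] ⊥ ≤ y ⊔ dia^[n] ⊤) :=
  exists_not_le_of_isLUB_of_isGLB (monotone_inf_iterate_bot hbox x)
    (antitone_sup_iterate_top hdia y) hx hy hxy

/-- If `A` is a GLD-lattice and `x ≰ y`, then there is `n ∈ ℕ` with
`x ⊓ □ⁿ⊥ ≰ y ⊔ ◇ⁿ⊤`. -/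
theorem stmt0 {A : Type*} [DistribLattice A] [BoundedOrder A] (box dia : A → A)
    (h : IsGLDLattice box dia) (x y : A) (hxy : ¬ x ≤ y) :
    ∃ n : ℕ, ¬ (x ⊓ box^[n] ⊥ ≤ y ⊔ dia^[n] ⊤) :=
  stmt0_general h.monotone_box h.monotone_dia (h.isLUB_range_inf_iterate_box x)
    (h.isGLB_range_sup_iterate_dia y) hxy
end

section
/- Let A be a GLD-lattice and let x, y ∈ A with x ≰ y. Then there exists a GLD-filter F of A such that x ∈ F and y ∉ F. -/
/-- A GLD-filter of `A`: a prime filter `F` such that for some `n`,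
`◇ⁿ⊤ ∉ F` and `□ⁿ⊥ ∈ F`. -/
structure IsGLDFilter {A : Type*} [DistribLattice A] [BoundedOrder A]
    (box dia : A → A) (F : Set A) : Prop where
  nonempty : F.Nonempty
  mem_of_le : ∀ x y : A, x ∈ F → x ≤ y → y ∈ F
  inf_mem : ∀ x y : A, x ∈ F → y ∈ F → x ⊓ y ∈ F
  bot_not_mem : ⊥ ∉ F
  prime : ∀ x y : A, x ⊔ y ∈ F → x ∈ F ∨ y ∈ F
  gld : ∃ n : ℕ, dia^[n] ⊤ ∉ F ∧ box^[n] ⊥ ∈ F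

theorem exists_inf_not_le_sup_of_isLUB_of_isGLB {A ι : Type*} [Lattice A] [Preorder ι]
    [IsDirectedOrder ι] {u v : ι → A} {x y : A} (hu : Monotone u) (hv : Antitone v)
    (hx : IsLUB {z | ∃ i, z = x ⊓ u i} x) (hy : IsGLB {z | ∃ i, z = y ⊔ v i} y) (hxy : ¬ x ≤ y) :
    ∃ i, ¬ x ⊓ u i ≤ y ⊔ v i := by
  obtain ⟨i, hi⟩ : ∃ i, ¬ x ⊓ u i ≤ y := by
    simpa [isLUB_le_iff hx, upperBounds] using hxy
  obtain ⟨j, hij⟩ : ∃ j, ¬ x ⊓ u i ≤ y ⊔ v j := by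
    simpa [le_isGLB_iff hy, lowerBounds] using hi
  obtain ⟨k, hik, hjk⟩ := exists_ge_ge i j
  exact ⟨k, fun hk => hij <|
    calc x ⊓ u i ≤ x ⊓ u k := inf_le_inf_left x (hu hik)
      _ ≤ y ⊔ v k := hk
      _ ≤ y ⊔ v j := sup_le_sup_left (hv hjk) y⟩

theorem exists_isPrime_mem_notMem_of_not_le {A : Type*} [DistribLattice A] {a b : A}
    (hab : ¬ a ≤ b) : ∃ J : Order.Ideal A, J.IsPrime ∧ b ∈ J ∧ a ∉ J := by
  have hdisj : Disjoint (Order.PFilter.principal a : Set A) (Order.Ideal.principal b : Set A) :=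
    Set.disjoint_left.2 fun _ haz hzb => hab (le_trans haz hzb)
  obtain ⟨J, hJ, hbJ, haJ⟩ := DistribLattice.prime_ideal_of_disjoint_filter_ideal hdisj
  exact ⟨J, hJ, Order.Ideal.principal_le_iff.1 hbJ,
    Set.disjoint_left.1 haJ (Order.PFilter.mem_principal.2 le_rfl)⟩

section

variable {A : Type*} [DistribLattice A] [BoundedOrder A] {box dia : A → A}

theorem IsGLDLattice.monotone_box_s1 (h : IsGLDLattice box dia) : Monotone box :=
  Monotone.of_map_inf h.box_inf

theorem IsGLDLattice.monotone_dia_s1 (h : IsGLDLattice box dia) : Monotone dia :=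
  Monotone.of_map_sup h.dia_sup

theorem isGLDFilter_compl_of_isPrime {J : Order.Ideal A} (hJ : J.IsPrime) {n : ℕ}
    (hdia : dia^[n] ⊤ ∈ J) (hbox : box^[n] ⊥ ∉ J) : IsGLDFilter box dia (J : Set A)ᶜ where
  nonempty := ⟨_, hbox⟩
  mem_of_le _ _ ha hab hb := ha (J.lower hab hb)
  inf_mem _ _ ha hb hab := (hJ.mem_or_mem hab).elim ha hb
  bot_not_mem hbot := hbot J.bot_mem
  prime _ _ hab := not_and_or.1 fun hJab => hab (Order.Ideal.sup_mem hJab.1 hJab.2)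
  gld := ⟨n, not_not_intro hdia, hbox⟩

theorem stmt1_general (hbox : Monotone box) (hdia : Monotone dia) {x y : A}
    (hx : IsLUB {z | ∃ n : ℕ, z = x ⊓ box^[n] ⊥} x)
    (hy : IsGLB {z | ∃ n : ℕ, z = y ⊔ dia^[n] ⊤} y) (hxy : ¬ x ≤ y) :
    ∃ F : Set A, IsGLDFilter box dia F ∧ x ∈ F ∧ y ∉ F := by
  have hboxIter : Monotone fun n : ℕ => box^[n] ⊥ := hbox.monotone_iterate_of_le_map bot_le
  have hdiaIter : Antitone fun n : ℕ => dia^[n] ⊤ := hdia.antitone_iterate_of_map_le le_top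
  obtain ⟨n, hn⟩ := exists_inf_not_le_sup_of_isLUB_of_isGLB hboxIter hdiaIter hx hy hxy
  obtain ⟨J, hJ, hyJ, hxJ⟩ := exists_isPrime_mem_notMem_of_not_le hn
  obtain ⟨hy_mem, hdia_mem⟩ := Order.Ideal.sup_mem_iff.1 hyJ
  have hx_notMem : x ∉ J := fun hx_mem => hxJ (J.lower inf_le_left hx_mem)
  have hbox_notMem : box^[n] ⊥ ∉ J := fun hbox_mem => hxJ (J.lower inf_le_right hbox_mem)
  exact ⟨(J : Set A)ᶜ, isGLDFilter_compl_of_isPrime hJ hdia_mem hbox_notMem,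
    hx_notMem, not_not_intro hy_mem⟩

end

/-- If `A` is a GLD-lattice and `x ≰ y`, then there is a GLD-filter `F` of `A`
with `x ∈ F` and `y ∉ F`. -/
theorem stmt1 {A : Type*} [DistribLattice A] [BoundedOrder A] (box dia : A → A)
    (h : IsGLDLattice box dia) (x y : A) (hxy : ¬ x ≤ y) :
    ∃ F : Set A, IsGLDFilter box dia F ∧ x ∈ F ∧ y ∉ F :=
  stmt1_general h.monotone_box_s1 h.monotone_dia_s1 (h.isLUB_inf_boxIter x) (h.isGLB_sup_diaIter y) hxy
end

section
/- Every GLD-algebra is a GL-algebra; that is, if A is a GLD-algebra, then □(□x → x) ≤ □x holds for every x ∈ A. -/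
/-!
Put `b = □(□x → x)`. Since `b ≤ □b`, a bound `a ⊓ b ≤ □x` gives
`□a ⊓ b ≤ □(a ⊓ b ⊓ (□x → x)) ≤ □(□x ⊓ (□x → x)) ≤ □x`, so `□ⁿ⊥ ⊓ b ≤ □x` for every `n`.
By residuation every `□ⁿ⊥` lies below `b → □x`, hence so does their supremum `⊤`.
-/

/-- A GLD-algebra structure on a Boolean algebra `A`, given by the modal
operation `box`. -/
structure IsGLDAlgebra {A : Type*} [BooleanAlgebra A] (box : A → A) : Prop where
  box_top : box ⊤ = ⊤
  box_inf : ∀ x y : A, box (x ⊓ y) = box x ⊓ box y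
  box_le_box_box : ∀ x : A, box x ≤ box (box x)
  isLUB_boxIter : IsLUB {y : A | ∃ n : ℕ, y = box^[n] ⊥} ⊤

theorem map_inf_map_le_map_inf_map_inf {α : Type*} [SemilatticeInf α] (box : InfHom α α)
    (box_le_box_box : ∀ a, box a ≤ box (box a)) (a b : α) :
    box a ⊓ box b ≤ box (a ⊓ box b ⊓ b) := by
  rw [map_inf, map_inf, inf_assoc]
  exact inf_le_inf_left _ (le_inf (box_le_box_box b) le_rfl)

theorem map_inf_map_himp_le_of_inf_le {α : Type*} [GeneralizedHeytingAlgebra α]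
    (box : InfHom α α) (box_le_box_box : ∀ a, box a ≤ box (box a)) {a x : α}
    (ha : a ⊓ box (box x ⇨ x) ≤ box x) : box a ⊓ box (box x ⇨ x) ≤ box x :=
  calc box a ⊓ box (box x ⇨ x)
      ≤ box (a ⊓ box (box x ⇨ x) ⊓ (box x ⇨ x)) :=
        map_inf_map_le_map_inf_map_inf box box_le_box_box a _
    _ ≤ box (box x ⊓ (box x ⇨ x)) := OrderHomClass.mono box (inf_le_inf_right _ ha)
    _ ≤ box x := OrderHomClass.mono box inf_himp_le

theorem iterate_bot_inf_map_himp_le {α : Type*} [HeytingAlgebra α] (box : InfHom α α)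
    (box_le_box_box : ∀ a, box a ≤ box (box a)) (n : ℕ) (x : α) :
    box^[n] ⊥ ⊓ box (box x ⇨ x) ≤ box x := by
  induction n with
  | zero => exact inf_le_left.trans bot_le
  | succ n ih =>
    rw [Function.iterate_succ_apply']
    exact map_inf_map_himp_le_of_inf_le box box_le_box_box ih

theorem le_of_isLUB_top_of_forall_inf_le {α : Type*} [GeneralizedHeytingAlgebra α] {s : Set α}
    {a b : α} (hs : IsLUB s ⊤) (h : ∀ y ∈ s, y ⊓ a ≤ b) : a ≤ b := by
  have top_le_himp : ⊤ ≤ a ⇨ b := hs.2 fun y hy => le_himp_iff.2 (h y hy)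
  exact himp_eq_top_iff.1 (top_le_iff.1 top_le_himp)

theorem stmt2_general {α : Type*} [HeytingAlgebra α] (box : InfHom α α)
    (box_le_box_box : ∀ x, box x ≤ box (box x))
    (isLUB_iterate_bot : IsLUB {y : α | ∃ n : ℕ, y = box^[n] ⊥} ⊤) (x : α) :
    box (box x ⇨ x) ≤ box x := by
  refine le_of_isLUB_top_of_forall_inf_le isLUB_iterate_bot ?_
  rintro _ ⟨n, rfl⟩
  exact iterate_bot_inf_map_himp_le box box_le_box_box n x

/-- Every GLD-algebra is a GL-algebra: `□(□x → x) ≤ □x` holds for all `x`,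
where `u → v` is `uᶜ ⊔ v`. -/
theorem stmt2 {A : Type*} [BooleanAlgebra A] (box : A → A)
    (h : IsGLDAlgebra box) :
    ∀ x : A, box ((box x)ᶜ ⊔ x) ≤ box x := by
  intro x
  rw [sup_comm, ← himp_eq]
  exact stmt2_general ⟨box, h.box_inf⟩ h.box_le_box_box h.isLUB_boxIter x
end

section
/- Let A be a GLD-lattice and, for each GLD-filter F of A, let N(F) be the collection of all sets X of GLD-filters such that η(x) ∩ (η(y))ᶜ ⊆ X for some x, y ∈ A with □x ∈ F and ◇y ∉ F. Then each N(F) is a filter of the powerset of the set of GLD-filters of A: it is nonempty, upward closed under ⊆, and closed under binary intersections. -/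
/-- The type of GLD-filters of `A`. -/
def GLDFilter (A : Type*) [DistribLattice A] [BoundedOrder A] (box dia : A → A) :=
  {F : Set A // IsGLDFilter box dia F}

/-- `eta x` is the set of GLD-filters containing `x`. -/
def eta {A : Type*} [DistribLattice A] [BoundedOrder A] (box dia : A → A)
    (x : A) : Set (GLDFilter A box dia) :=
  {F | x ∈ F.1}

/-- A GLD-filter frame of `A`: each `N F` is a filter of the powerset of the
set of GLD-filters, and the neighborhood conditions relating `N` to `box`,
`dia` and `eta` hold. -/
structure IsGLDFilterFrame {A : Type*} [DistribLattice A] [BoundedOrder A]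
    (box dia : A → A)
    (N : GLDFilter A box dia → Set (Set (GLDFilter A box dia))) : Prop where
  nonempty : ∀ F, (N F).Nonempty
  mem_of_subset : ∀ F, ∀ X Y : Set (GLDFilter A box dia),
    X ∈ N F → X ⊆ Y → Y ∈ N F
  inter_mem : ∀ F, ∀ X Y : Set (GLDFilter A box dia),
    X ∈ N F → Y ∈ N F → X ∩ Y ∈ N F
  eta_mem : ∀ F x, box x ∈ F.1 → eta box dia x ∈ N F
  compl_eta_mem : ∀ F x, dia x ∉ F.1 → (eta box dia x)ᶜ ∈ N F
  eta_not_mem : ∀ F x, box x ∉ F.1 → eta box dia x ∉ N F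
  compl_eta_not_mem : ∀ F x, dia x ∈ F.1 → (eta box dia x)ᶜ ∉ N F

/-- The box operator on the powerset of the set of GLD-filters induced by a
neighborhood map `N`. -/
def boxZ {A : Type*} [DistribLattice A] [BoundedOrder A] (box dia : A → A)
    (N : GLDFilter A box dia → Set (Set (GLDFilter A box dia))) :
    Set (GLDFilter A box dia) → Set (GLDFilter A box dia) :=
  fun X => {F | X ∈ N F}

/-- The diamond operator induced by a neighborhood map `N`. -/
def diaZ {A : Type*} [DistribLattice A] [BoundedOrder A] (box dia : A → A)
    (N : GLDFilter A box dia → Set (Set (GLDFilter A box dia))) :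
    Set (GLDFilter A box dia) → Set (GLDFilter A box dia) :=
  fun X => (boxZ box dia N Xᶜ)ᶜ

/-- The canonical neighborhood map of a GLD-lattice. -/
def canonN {A : Type*} [DistribLattice A] [BoundedOrder A] (box dia : A → A)
    (F : GLDFilter A box dia) : Set (Set (GLDFilter A box dia)) :=
  {X | ∃ x y : A, box x ∈ F.1 ∧ dia y ∉ F.1 ∧
    eta box dia x ∩ (eta box dia y)ᶜ ⊆ X}

/-!
The map `η` sends meets to intersections and joins to unions, so the basic sets `η(x) ∩ η(y)ᶜ` of
`(x, y)` and `(x', y')` intersect in the basic set of `(x ⊓ x', y ⊔ y')`. This pair again satisfies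
the conditions at `F`: a filter is closed under meets and `□` preserves them, and the complement of
a prime filter is closed under joins and `◇` preserves them.
-/

section

variable {A : Type*} [DistribLattice A] [BoundedOrder A] {box dia : A → A}

namespace IsGLDFilter

variable {F : Set A} {x y : A}

theorem top_mem (hF : IsGLDFilter box dia F) : ⊤ ∈ F :=
  let ⟨a, ha⟩ := hF.nonempty
  hF.mem_of_le a ⊤ ha le_top

theorem inf_mem_iff (hF : IsGLDFilter box dia F) : x ⊓ y ∈ F ↔ x ∈ F ∧ y ∈ F :=
  ⟨fun hxy => ⟨hF.mem_of_le _ _ hxy inf_le_left, hF.mem_of_le _ _ hxy inf_le_right⟩,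
    fun ⟨hx, hy⟩ => hF.inf_mem x y hx hy⟩

theorem sup_mem_iff (hF : IsGLDFilter box dia F) : x ⊔ y ∈ F ↔ x ∈ F ∨ y ∈ F :=
  ⟨hF.prime x y,
    fun hxy => hxy.elim (hF.mem_of_le _ _ · le_sup_left) (hF.mem_of_le _ _ · le_sup_right)⟩

end IsGLDFilter

theorem eta_inf (x y : A) : eta box dia (x ⊓ y) = eta box dia x ∩ eta box dia y :=
  Set.ext fun G => G.2.inf_mem_iff

theorem eta_sup (x y : A) : eta box dia (x ⊔ y) = eta box dia x ∪ eta box dia y :=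
  Set.ext fun G => G.2.sup_mem_iff

theorem eta_inf_inter_compl_eta_sup (x x' y y' : A) :
    eta box dia (x ⊓ x') ∩ (eta box dia (y ⊔ y'))ᶜ =
      (eta box dia x ∩ (eta box dia y)ᶜ) ∩ (eta box dia x' ∩ (eta box dia y')ᶜ) := by
  rw [eta_inf, eta_sup, Set.compl_union, Set.inter_inter_inter_comm]

namespace canonN

variable {F : GLDFilter A box dia} {X Y : Set (GLDFilter A box dia)}

theorem univ_mem (box_top : box ⊤ = ⊤) (dia_bot : dia ⊥ = ⊥) : Set.univ ∈ canonN box dia F :=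
  ⟨⊤, ⊥, box_top.symm ▸ F.2.top_mem, dia_bot.symm ▸ F.2.bot_not_mem, Set.subset_univ _⟩

theorem mem_of_subset (hX : X ∈ canonN box dia F) (hXY : X ⊆ Y) : Y ∈ canonN box dia F :=
  let ⟨x, y, hx, hy, hxyX⟩ := hX
  ⟨x, y, hx, hy, hxyX.trans hXY⟩

theorem inter_mem (le_box_inf : ∀ x y, box x ⊓ box y ≤ box (x ⊓ y))
    (dia_sup_le : ∀ x y, dia (x ⊔ y) ≤ dia x ⊔ dia y)
    (hX : X ∈ canonN box dia F) (hY : Y ∈ canonN box dia F) : X ∩ Y ∈ canonN box dia F := by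
  obtain ⟨x, y, hx, hy, hxyX⟩ := hX
  obtain ⟨x', y', hx', hy', hxyY⟩ := hY
  have box_mem : box (x ⊓ x') ∈ F.1 :=
    F.2.mem_of_le _ _ (F.2.inf_mem _ _ hx hx') (le_box_inf x x')
  have dia_not_mem : dia (y ⊔ y') ∉ F.1 := fun hmem =>
    (F.2.prime _ _ (F.2.mem_of_le _ _ hmem (dia_sup_le y y'))).elim hy hy'
  refine ⟨x ⊓ x', y ⊔ y', box_mem, dia_not_mem, ?_⟩
  rw [eta_inf_inter_compl_eta_sup]
  exact Set.inter_subset_inter hxyX hxyY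

end canonN

theorem stmt4_general (box_top : box ⊤ = ⊤) (dia_bot : dia ⊥ = ⊥)
    (le_box_inf : ∀ x y, box x ⊓ box y ≤ box (x ⊓ y))
    (dia_sup_le : ∀ x y, dia (x ⊔ y) ≤ dia x ⊔ dia y) (F : GLDFilter A box dia) :
    (canonN box dia F).Nonempty ∧
    (∀ X Y : Set (GLDFilter A box dia),
      X ∈ canonN box dia F → X ⊆ Y → Y ∈ canonN box dia F) ∧
    (∀ X Y : Set (GLDFilter A box dia),
      X ∈ canonN box dia F → Y ∈ canonN box dia F →
        X ∩ Y ∈ canonN box dia F) :=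
  ⟨⟨Set.univ, canonN.univ_mem box_top dia_bot⟩, fun _ _ => canonN.mem_of_subset,
    fun _ _ => canonN.inter_mem le_box_inf dia_sup_le⟩

end

/-- For a GLD-lattice `A`, each `canonN F` is a filter of the powerset of the
set of GLD-filters: nonempty, upward closed under `⊆`, and closed under binary
intersections. -/
theorem stmt4 {A : Type*} [DistribLattice A] [BoundedOrder A] (box dia : A → A)
    (h : IsGLDLattice box dia) (F : GLDFilter A box dia) :
    (canonN box dia F).Nonempty ∧
    (∀ X Y : Set (GLDFilter A box dia),
      X ∈ canonN box dia F → X ⊆ Y → Y ∈ canonN box dia F) ∧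
    (∀ X Y : Set (GLDFilter A box dia),
      X ∈ canonN box dia F → Y ∈ canonN box dia F →
        X ∩ Y ∈ canonN box dia F) :=
  stmt4_general h.box_top h.dia_bot (fun x y => (h.box_inf x y).ge)
    (fun x y => (h.dia_sup x y).le) F
end

section
/- Let A be a GLD-lattice, let N be the canonical neighborhood map of A, and define □_Z X = {F : F is a GLD-filter of A and X ∈ N(F)} for sets X of GLD-filters. Then □_Z X ⊆ □_Z □_Z X for every set X of GLD-filters, and the union over n ∈ ℕ of the sets □_Zⁿ ∅ (n-fold iteration of □_Z applied to the empty set) equals the set of all GLD-filters of A. -/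
section CanonicalNeighborhoods

variable {A : Type*} [DistribLattice A] [BoundedOrder A] {box dia : A → A}

lemma GLDFilter.exists_dia_notMem (F : GLDFilter A box dia) : ∃ y, dia y ∉ F.1 := by
  obtain ⟨n, hn, -⟩ := F.2.gld
  cases n with
  | zero =>
    obtain ⟨x, hx⟩ := F.2.nonempty
    exact absurd (F.2.mem_of_le x ⊤ hx le_top) hn
  | succ n =>
    rw [Function.iterate_succ_apply'] at hn
    exact ⟨dia^[n] ⊤, hn⟩

variable (box dia)

lemma eta_bot : eta box dia ⊥ = ∅ :=
  Set.eq_empty_of_forall_notMem fun F => F.2.bot_not_mem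

lemma boxZ_canonN_mono : Monotone (boxZ box dia (canonN box dia)) :=
  fun _ _ hXY _ ⟨x, y, hx, hy, hX⟩ => ⟨x, y, hx, hy, hX.trans hXY⟩

lemma eta_box_subset_boxZ_canonN (x : A) :
    eta box dia (box x) ⊆ boxZ box dia (canonN box dia) (eta box dia x) := by
  intro F hx
  obtain ⟨y, hy⟩ := F.exists_dia_notMem
  exact ⟨x, y, hx, hy, Set.inter_subset_left⟩

lemma eta_iterate_box_subset_iterate_boxZ_canonN (n : ℕ) (x : A) :
    eta box dia (box^[n] x) ⊆ (boxZ box dia (canonN box dia))^[n] (eta box dia x) :=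
  Monotone.le_iterate_comp_of_le (h := eta box dia) (g := box) (boxZ_canonN_mono box dia)
    (eta_box_subset_boxZ_canonN box dia) n x

lemma iUnion_iterate_boxZ_canonN_empty :
    ⋃ n : ℕ, (boxZ box dia (canonN box dia))^[n] ∅ = Set.univ := by
  refine Set.eq_univ_of_forall fun F => ?_
  obtain ⟨n, -, hn⟩ := F.2.gld
  have hF : F ∈ (boxZ box dia (canonN box dia))^[n] (eta box dia ⊥) :=
    eta_iterate_box_subset_iterate_boxZ_canonN box dia n ⊥ hn
  rw [eta_bot] at hF
  exact Set.mem_iUnion_of_mem n hF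

lemma eta_box_inter_compl_eta_dia_subset (x y : A) :
    eta box dia (box x) ∩ (eta box dia (dia y))ᶜ ⊆
      boxZ box dia (canonN box dia) (eta box dia x ∩ (eta box dia y)ᶜ) :=
  fun _ ⟨hx, hy⟩ => ⟨x, y, hx, hy, subset_rfl⟩

variable {box dia} in
lemma boxZ_canonN_subset_boxZ_boxZ (hbox : ∀ x, box x ≤ box (box x))
    (hdia : ∀ x, dia (dia x) ≤ dia x) (X : Set (GLDFilter A box dia)) :
    boxZ box dia (canonN box dia) X ⊆
      boxZ box dia (canonN box dia) (boxZ box dia (canonN box dia) X) := by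
  rintro F ⟨x, y, hx, hy, hX⟩
  have hx' : box (box x) ∈ F.1 := F.2.mem_of_le _ _ hx (hbox x)
  have hy' : dia (dia y) ∉ F.1 := fun h => hy (F.2.mem_of_le _ _ h (hdia y))
  exact ⟨box x, dia y, hx', hy',
    (eta_box_inter_compl_eta_dia_subset box dia x y).trans (boxZ_canonN_mono box dia hX)⟩

end CanonicalNeighborhoods

theorem stmt7_general {A : Type*} [DistribLattice A] [BoundedOrder A] (box dia : A → A)
    (hbox : ∀ x, box x ≤ box (box x)) (hdia : ∀ x, dia (dia x) ≤ dia x) :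
    (∀ X : Set (GLDFilter A box dia),
      boxZ box dia (canonN box dia) X ⊆
        boxZ box dia (canonN box dia) (boxZ box dia (canonN box dia) X)) ∧
    (⋃ n : ℕ, (boxZ box dia (canonN box dia))^[n] ∅) = Set.univ :=
  ⟨boxZ_canonN_subset_boxZ_boxZ hbox hdia, iUnion_iterate_boxZ_canonN_empty box dia⟩

/-- For a GLD-lattice `A` and the operator `boxZ` induced by the canonical
neighborhood map: `boxZ X ⊆ boxZ (boxZ X)` for all `X`, and the union of the
iterates `boxZⁿ ∅` is the set of all GLD-filters. -/
theorem stmt7 {A : Type*} [DistribLattice A] [BoundedOrder A] (box dia : A → A)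
    (h : IsGLDLattice box dia) :
    (∀ X : Set (GLDFilter A box dia),
      boxZ box dia (canonN box dia) X ⊆
        boxZ box dia (canonN box dia) (boxZ box dia (canonN box dia) X)) ∧
    (⋃ n : ℕ, (boxZ box dia (canonN box dia))^[n] ∅) = Set.univ :=
  stmt7_general box dia h.box_le_box_box h.dia_dia_le
end

section
/- On the powerset of ℕ∞ = ℕ ∪ {∞} (the linear order ω + 1), define □X = {n ∈ ℕ∞ : ∀ m ∈ ℕ∞, m < n → m ∈ X}. Then: (i) this operator makes the powerset Boolean algebra a GL-algebra, i.e., □(univ) = univ, □(X ∩ Y) = □X ∩ □Y, and □((□X)ᶜ ∪ X) ⊆ □X for all X, Y ⊆ ℕ∞; but (ii) it is not a GLD-algebra, since the union over n ∈ ℕ of the sets □ⁿ∅ (n-fold iteration of □ applied to ∅) equals ℕ and hence is not all of ℕ∞. -/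
/-- The box operator of the complex algebra of the Kripke frame `⟨ω + 1, R⟩`
where `(n, m) ∈ R` iff `m < n`: `□X = {n | ∀ m < n, m ∈ X}`. -/
def boxO : Set ℕ∞ → Set ℕ∞ :=
  fun X => {n : ℕ∞ | ∀ m : ℕ∞, m < n → m ∈ X}

/-!
The Löb inequality is strong induction: a point of `□(¬□X ⊔ X)` is one below which the induction
step for membership in `X` holds. The iterate `□ⁿ∅` consists of the points below which there is no
chain of `n` further points, that is, of the points of height less than `n`; so the iterates exhaust
exactly the points of finite height. In `ω + 1` the height of a point is the point itself, and `⊤`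
is left out.
-/

section Preorder

variable {α : Type*} [Preorder α]

/-- The box operator of the complex algebra of the Kripke frame `⟨α, >⟩`: the operator `boxO` over
an arbitrary preorder. As a `SetRel.core`, it preserves `Set.univ` and intersections. -/
def box : Set α → Set α :=
  SetRel.core {p : α × α | p.2 < p.1}

theorem mem_box {X : Set α} {a : α} : a ∈ box X ↔ ∀ b < a, b ∈ X :=
  Iff.rfl

theorem box_compl_box_union_subset [WellFoundedLT α] (X : Set α) :
    box ((box X)ᶜ ∪ X) ⊆ box X := by
  intro a ha
  refine mem_box.2 fun b hba => ?_
  induction b using WellFoundedLT.induction with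
  | ind b ih =>
    have hb : b ∈ box X := mem_box.2 fun c hcb => ih c hcb (hcb.trans hba)
    exact (ha hba).resolve_left (not_not_intro hb)

theorem iterate_box_empty (n : ℕ) : box^[n] (∅ : Set α) = {a | Order.height a < n} := by
  induction n with
  | zero => simp
  | succ n ih =>
    ext a
    calc a ∈ box^[n + 1] ∅
      _ ↔ ∀ b < a, Order.height b < n := by
        rw [Function.iterate_succ_apply', ih, mem_box]; rfl
      _ ↔ Order.height a ≤ n := Order.height_le_coe_iff.symm
      _ ↔ Order.height a < (n + 1 : ℕ) := by
        rw [Nat.cast_succ, ENat.lt_add_one_iff (ENat.natCast_ne_top n)]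

theorem iUnion_iterate_box_empty :
    (⋃ n : ℕ, box^[n] (∅ : Set α)) = {a | Order.height a ≠ ⊤} := by
  ext a
  simp only [iterate_box_empty, Set.mem_iUnion, Set.mem_ofPred_eq]
  exact ⟨fun ⟨_, hn⟩ => hn.ne_top, fun ha => ENat.exists_nat_gt ha⟩

theorem stmt9_general [WellFoundedLT α] :
    (box Set.univ = (Set.univ : Set α) ∧
     (∀ X Y : Set α, box (X ∩ Y) = box X ∩ box Y) ∧
     (∀ X : Set α, box ((box X)ᶜ ∪ X) ⊆ box X)) ∧
    (⋃ n : ℕ, box^[n] (∅ : Set α)) = {a | Order.height a ≠ ⊤} ∧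
    ((⋃ n : ℕ, box^[n] (∅ : Set α)) ≠ Set.univ ↔ ∃ a : α, Order.height a = ⊤) := by
  refine ⟨⟨SetRel.core_univ, SetRel.core_inter _, box_compl_box_union_subset⟩,
    iUnion_iterate_box_empty, ?_⟩
  simp [iUnion_iterate_box_empty, Set.ne_univ_iff_exists_notMem]

end Preorder

/-- The powerset of `ω + 1` with `boxO` is a GL-algebra, but not a
GLD-algebra: the union of the iterates `□ⁿ∅` is `ℕ`, hence not everything. -/
theorem stmt9 :
    (boxO Set.univ = Set.univ ∧
     (∀ X Y : Set ℕ∞, boxO (X ∩ Y) = boxO X ∩ boxO Y) ∧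
     (∀ X : Set ℕ∞, boxO ((boxO X)ᶜ ∪ X) ⊆ boxO X)) ∧
    (⋃ n : ℕ, boxO^[n] ∅) = {x : ℕ∞ | x ≠ ⊤} ∧
    (⋃ n : ℕ, boxO^[n] ∅) ≠ Set.univ := by
  have hbox : boxO = box := rfl
  obtain ⟨hGL, hUnion, hNe⟩ := stmt9_general (α := ℕ∞)
  rw [hbox]
  exact ⟨hGL, by simpa only [Order.height_enat] using hUnion, hNe.2 ⟨⊤, Order.height_enat ⊤⟩⟩
end

section
/- Let k ∈ ℕ, let φ₁, …, φ_k, ψ₁, …, ψ_k, φ, ψ be positive modal formulas. Then the following are equivalent: (a) for every GLD-algebra B (regarded as a modal distributive lattice via ◇x = ¬□¬x) and every valuation v on B, if v(φᵢ) ≤ v(ψᵢ) for all i = 1, …, k then v(φ) ≤ v(ψ); (b) for every GLD-lattice A and every valuation v on A, if v(φᵢ) ≤ v(ψᵢ) for all i = 1, …, k then v(φ) ≤ v(ψ). -/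
/-!
A GLD-algebra is a GLD-lattice because meets in a Boolean algebra distribute over existing joins.
Conversely, every GLD-lattice `A` embeds, as a modal lattice, into a GLD-algebra, and
quasi-identities are inherited along embeddings.

The embedding is the canonical-frame representation restricted to prime filters of finite depth,
that is, containing some `□ⁿ⊥`. Such a filter contains `□ⁿ⁺¹⊥` for some `n`, and every filter
accessible from it contains `□ⁿ⊥`, so these filters form a generated subframe of the canonical frame
and the representation still commutes with `□` and `◇`. The powerset of this subframe is a
GLD-algebra, because the sets representing the `□ⁿ⊥` cover it. Finally, if `a ≰ b` then some
`a ⊓ □ⁿ⊥ ≰ b`, because `a` is the join of the `a ⊓ □ⁿ⊥`; a prime filter separating these has finite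
depth, so enough points are left for the representation to be injective.
-/

/-- Positive modal formulas, built from propositional variables and `⊥`, `⊤`
by `∨`, `∧`, `◇`, `□`. -/
inductive PosForm : Type
  | var : ℕ → PosForm
  | bot : PosForm
  | top : PosForm
  | or : PosForm → PosForm → PosForm
  | and : PosForm → PosForm → PosForm
  | dia : PosForm → PosForm
  | box : PosForm → PosForm

/-- The value of a positive modal formula in a bounded lattice equipped with
operations `box` and `dia`, under a valuation `v` of the variables. -/
def PosForm.eval {A : Type*} [Lattice A] [BoundedOrder A]
    (box dia : A → A) (v : ℕ → A) : PosForm → A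
  | .var p => v p
  | .bot => ⊥
  | .top => ⊤
  | .or φ ψ => PosForm.eval box dia v φ ⊔ PosForm.eval box dia v ψ
  | .and φ ψ => PosForm.eval box dia v φ ⊓ PosForm.eval box dia v ψ
  | .dia φ => dia (PosForm.eval box dia v φ)
  | .box φ => box (PosForm.eval box dia v φ)

universe u

namespace PosForm

/-- The quasi-identity `(⋀ i, φs i ≤ ψs i) → φ ≤ ψ`, with possibly infinitely many premises, holds
in the lattice `A` with modal operations `box` and `dia`. -/
def SatisfiesQuasiIdentity {A ι : Type*} [Lattice A] [BoundedOrder A] (box dia : A → A)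
    (φs ψs : ι → PosForm) (φ ψ : PosForm) : Prop :=
  ∀ v : ℕ → A, (∀ i, eval box dia v (φs i) ≤ eval box dia v (ψs i)) →
    eval box dia v φ ≤ eval box dia v ψ

variable {A B : Type*} [Lattice A] [BoundedOrder A] [Lattice B] [BoundedOrder B]
  {box dia : A → A} {box' dia' : B → B} {f : BoundedLatticeHom A B}

theorem eval_comp_hom (hbox : Function.Semiconj f box box') (hdia : Function.Semiconj f dia dia')
    (v : ℕ → A) (φ : PosForm) : eval box' dia' (f ∘ v) φ = f (eval box dia v φ) := by
  induction φ with
  | var p => rfl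
  | bot => exact (map_bot f).symm
  | top => exact (map_top f).symm
  | or φ ψ ihφ ihψ => simp only [eval, ihφ, ihψ, map_sup]
  | and φ ψ ihφ ihψ => simp only [eval, ihφ, ihψ, map_inf]
  | dia φ ih => simp only [eval, ih, hdia.eq]
  | box φ ih => simp only [eval, ih, hbox.eq]

theorem SatisfiesQuasiIdentity.of_injective {ι : Type*} {φs ψs : ι → PosForm} {φ ψ : PosForm}
    (hB : SatisfiesQuasiIdentity box' dia' φs ψs φ ψ) (hf : Function.Injective f)
    (hbox : Function.Semiconj f box box') (hdia : Function.Semiconj f dia dia') :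
    SatisfiesQuasiIdentity box dia φs ψs φ ψ := by
  intro v hv
  have f_le_iff {a b : A} : f a ≤ f b ↔ a ≤ b := (orderEmbeddingOfInjective f hf).le_iff_le
  have hfv := hB (f ∘ v)
  simp only [eval_comp_hom hbox hdia, f_le_iff] at hfv
  exact hfv hv

end PosForm

/-- Positive modal algebras in the sense of Dunn: the laws of a GLD-lattice other than transitivity
and approximation by the iterates `□ⁿ⊥` and `◇ⁿ⊤`. They are the algebras for which the
canonical-frame representation preserves both modal operations. -/
structure IsPositiveModalAlgebra {A : Type*} [DistribLattice A] [BoundedOrder A]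
    (box dia : A → A) : Prop where
  box_top : box ⊤ = ⊤
  dia_bot : dia ⊥ = ⊥
  box_sup_le : ∀ x y : A, box (x ⊔ y) ≤ box x ⊔ dia y
  inf_dia_le : ∀ x y : A, box x ⊓ dia y ≤ dia (x ⊓ y)
  dia_sup : ∀ x y : A, dia (x ⊔ y) = dia x ⊔ dia y
  box_inf : ∀ x y : A, box (x ⊓ y) = box x ⊓ box y

theorem IsGLDLattice.isPositiveModalAlgebra {A : Type*} [DistribLattice A] [BoundedOrder A]
    {box dia : A → A} (h : IsGLDLattice box dia) : IsPositiveModalAlgebra box dia where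
  __ := h

namespace IsPositiveModalAlgebra

variable {A : Type*} [DistribLattice A] [BoundedOrder A] {box dia : A → A}

theorem box_mono (h : IsPositiveModalAlgebra box dia) : Monotone box :=
  .of_map_inf h.box_inf

theorem dia_mono (h : IsPositiveModalAlgebra box dia) : Monotone dia :=
  .of_map_sup h.dia_sup

theorem of_booleanAlgebra {B : Type*} [BooleanAlgebra B] {box : B → B} (box_top : box ⊤ = ⊤)
    (box_inf : ∀ x y : B, box (x ⊓ y) = box x ⊓ box y) :
    IsPositiveModalAlgebra box (fun x => (box xᶜ)ᶜ) where
  box_top := box_top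
  dia_bot := by rw [compl_bot, box_top, compl_top]
  box_sup_le x y := by
    rw [← himp_eq, le_himp_iff, ← box_inf]
    exact Monotone.of_map_inf box_inf (by simp [inf_sup_right])
  inf_dia_le x y := by
    rw [← sdiff_eq, sdiff_le_iff, ← himp_eq, le_himp_iff, ← box_inf]
    exact Monotone.of_map_inf box_inf (by simp [inf_sup_left])
  dia_sup x y := by rw [compl_sup, box_inf, compl_inf]
  box_inf := box_inf

end IsPositiveModalAlgebra

namespace IsGLDAlgebra

variable {B : Type*} [BooleanAlgebra B] {box : B → B}

theorem le_of_forall_inf_boxIter_le (h : IsGLDAlgebra box) {x u : B}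
    (hu : ∀ n, x ⊓ box^[n] ⊥ ≤ u) : x ≤ u := by
  have : ⊤ ≤ x ⇨ u := h.isLUB_boxIter.2 (by rintro _ ⟨n, rfl⟩; exact le_himp_iff'.2 (hu n))
  exact himp_eq_top_iff.1 (top_le_iff.1 this)

theorem le_of_forall_le_sup_compl_boxIter (h : IsGLDAlgebra box) {x u : B}
    (hu : ∀ n, u ≤ x ⊔ (box^[n] ⊥)ᶜ) : u ≤ x :=
  h.le_of_forall_inf_boxIter_le fun n => by
    rw [← le_himp_iff, himp_eq]
    exact hu n

theorem isGLDLattice (h : IsGLDAlgebra box) : IsGLDLattice box (fun x => (box xᶜ)ᶜ) where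
  __ := IsPositiveModalAlgebra.of_booleanAlgebra h.box_top h.box_inf
  dia_dia_le x := by
    rw [compl_compl]
    exact compl_le_compl (h.box_le_box_box xᶜ)
  box_le_box_box := h.box_le_box_box
  isLUB_inf_boxIter x := by
    refine ⟨?_, fun u hu => h.le_of_forall_inf_boxIter_le fun n => hu ⟨n, rfl⟩⟩
    rintro _ ⟨n, rfl⟩
    exact inf_le_left
  isGLB_sup_diaIter x := by
    have compl_boxIter (n : ℕ) : (box^[n] ⊥)ᶜ = (fun x => (box xᶜ)ᶜ)^[n] ⊤ := by
      have hcompl : Function.Semiconj compl box (fun x => (box xᶜ)ᶜ) := fun x => by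
        simp only [compl_compl]
      rw [(hcompl.iterate_right n).eq, compl_bot]
    refine ⟨?_, fun u hu => h.le_of_forall_le_sup_compl_boxIter fun n => ?_⟩
    · rintro _ ⟨n, rfl⟩
      exact le_sup_left
    · exact hu ⟨n, by rw [compl_boxIter]⟩

theorem setRel_core {X : Type*} (R : SetRel X X) [R.IsTrans] (hR : ∀ x, ∃ n, x ∈ R.core^[n] ⊥) :
    IsGLDAlgebra R.core where
  box_top := R.core_univ
  box_inf := R.core_inter
  box_le_box_box _ _ hx _ hxy _ hyz := hx (R.trans hxy hyz)
  isLUB_boxIter := by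
    refine ⟨fun _ _ => le_top, fun U hU x _ => ?_⟩
    obtain ⟨n, hn⟩ := hR x
    exact hU ⟨n, rfl⟩ hn

end IsGLDAlgebra

section PrimeFilter

variable {A : Type*} [DistribLattice A] [BoundedOrder A]

/-- The complement of a prime ideal as a prime filter. Prime filters are encoded throughout as
homomorphisms `p` to the two-element lattice `Prop`, where `p a` says that `a` is in the filter. -/
def complPrimeIdeal (J : Order.Ideal A) (hJ : J.IsPrime) : BoundedLatticeHom A Prop where
  toFun a := a ∉ J
  map_sup' a b := by simp [Order.Ideal.sup_mem_iff, imp_iff_not_or]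
  map_inf' a b := propext
    ⟨fun h => ⟨fun ha => h (J.lower inf_le_left ha), fun hb => h (J.lower inf_le_right hb)⟩,
      fun h hab => (hJ.mem_or_mem hab).elim h.1 h.2⟩
  map_top' := eq_true hJ.top_notMem
  map_bot' := eq_false (not_not_intro J.bot_mem)

theorem exists_primeFilter_of_disjoint {F : Order.PFilter A} {I : Order.Ideal A}
    (hFI : Disjoint (F : Set A) I) :
    ∃ q : BoundedLatticeHom A Prop, (∀ x ∈ F, q x) ∧ ∀ y ∈ I, ¬ q y := by
  obtain ⟨J, hJ, hIJ, hFJ⟩ := DistribLattice.prime_ideal_of_disjoint_filter_ideal hFI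
  exact ⟨complPrimeIdeal J hJ, fun x hx => Set.disjoint_left.1 hFJ hx,
    fun y hy => not_not_intro (hIJ hy)⟩

theorem exists_primeFilter_of_forall_not_inf_le_sup {F : Order.PFilter A} {I : Order.Ideal A}
    {a b : A} (h : ∀ x ∈ F, ∀ y ∈ I, ¬ x ⊓ a ≤ y ⊔ b) :
    ∃ q : BoundedLatticeHom A Prop, (∀ x ∈ F, q x) ∧ (∀ y ∈ I, ¬ q y) ∧ q a ∧ ¬ q b := by
  let Fa : Order.PFilter A := ⟨F.dual ⊔ .principal (.toDual a)⟩
  let Ib : Order.Ideal A := I ⊔ .principal b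
  have hdisj : Disjoint (Fa : Set A) Ib := by
    refine Set.disjoint_left.2 fun z hzF hzI => ?_
    obtain ⟨x, hx, hxz⟩ : ∃ x ∈ F, x ⊓ a ≤ z := (Lattice.mem_ideal_sup_principal _ _ F.dual).1 hzF
    obtain ⟨y, hy, hzy⟩ := (Lattice.mem_ideal_sup_principal b z I).1 hzI
    exact h x hx y hy (hxz.trans hzy)
  obtain ⟨q, hFq, hIq⟩ := exists_primeFilter_of_disjoint hdisj
  have hF_le : F.dual ≤ Fa.dual := le_sup_left
  have ha_mem : .toDual a ∈ Fa.dual := Order.Ideal.principal_le_iff.1 le_sup_right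
  exact ⟨q, fun x hx => hFq x (hF_le hx), fun y hy => hIq y ((le_sup_left : I ≤ Ib) hy),
    hFq a ha_mem, hIq b (Order.Ideal.principal_le_iff.1 le_sup_right)⟩

theorem exists_primeFilter_of_not_le {a b : A} (hab : ¬ a ≤ b) :
    ∃ q : BoundedLatticeHom A Prop, q a ∧ ¬ q b := by
  have hdisj : Disjoint (Order.PFilter.principal a : Set A) (Order.Ideal.principal b) :=
    Set.disjoint_left.2 fun _ haz hzb => hab (le_trans haz hzb)
  obtain ⟨q, hFq, hIq⟩ := exists_primeFilter_of_disjoint hdisj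
  exact ⟨q, hFq a le_rfl, hIq b le_rfl⟩

end PrimeFilter

section CanonicalFrame

variable {A : Type*} [DistribLattice A] [BoundedOrder A] {box dia : A → A}

/-- Accessibility of `q` from `p` in the canonical frame of prime filters. As `□` and `◇` are not
interdefinable, each of them contributes a condition. -/
def canonicalRel (box dia : A → A) :
    SetRel (BoundedLatticeHom A Prop) (BoundedLatticeHom A Prop) :=
  {(p, q) | (∀ x, p (box x) → q x) ∧ ∀ x, q x → p (dia x)}

/-- The canonical frame restricted to a set of prime filters. -/
def canonicalRelOn (box dia : A → A) (X : Set (BoundedLatticeHom A Prop)) : SetRel X X :=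
  Prod.map Subtype.val Subtype.val ⁻¹' canonicalRel box dia

/-- The representation of a distributive lattice by sets of prime filters from `X`. -/
def stoneHom (X : Set (BoundedLatticeHom A Prop)) : BoundedLatticeHom A (Set X) where
  toFun a := {p | p.1 a}
  map_sup' a b := by ext p; simp
  map_inf' a b := by ext p; simp
  map_top' := by ext p; simp
  map_bot' := by ext p; simp

/-- The prime filters containing some `□ⁿ⊥`. -/
def finiteDepthFilters (box : A → A) : Set (BoundedLatticeHom A Prop) :=
  {p | ∃ n : ℕ, p (box^[n] ⊥)}

theorem isTrans_canonicalRel (hbox : ∀ x, box x ≤ box (box x)) (hdia : ∀ x, dia (dia x) ≤ dia x) :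
    (canonicalRel box dia).IsTrans where
  trans p _ _ hpq hqr :=
    ⟨fun x hx => hqr.1 x (hpq.1 _ (OrderHomClass.mono p (hbox x) hx)),
      fun x hx => OrderHomClass.mono p (hdia x) (hpq.2 _ (hqr.2 x hx))⟩

theorem finiteDepthFilters_subset_core :
    finiteDepthFilters box ⊆ (canonicalRel box dia).core (finiteDepthFilters box) := by
  rintro p ⟨n, hn⟩ q hpq
  cases n with
  | zero => simp at hn
  | succ n => exact ⟨n, hpq.1 _ (Function.iterate_succ_apply' box n ⊥ ▸ hn)⟩

theorem stoneHom_finiteDepthFilters_injective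
    (hlub : ∀ x : A, IsLUB {y : A | ∃ n : ℕ, y = x ⊓ box^[n] ⊥} x) :
    Function.Injective (stoneHom (finiteDepthFilters box)) := by
  have le_of_stoneHom_le {a b : A}
      (hab : stoneHom (finiteDepthFilters box) a ≤ stoneHom (finiteDepthFilters box) b) :
      a ≤ b := by
    refine (hlub a).2 ?_
    rintro _ ⟨n, rfl⟩
    by_contra hle
    obtain ⟨q, hqa, hqb⟩ := exists_primeFilter_of_not_le hle
    rw [map_inf] at hqa
    exact hqb (hab (a := ⟨q, n, hqa.2⟩) hqa.1)
  exact fun a b hab => le_antisymm (le_of_stoneHom_le hab.le) (le_of_stoneHom_le hab.ge)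

namespace IsPositiveModalAlgebra

theorem exists_canonicalRel (h : IsPositiveModalAlgebra box dia) {p : BoundedLatticeHom A Prop}
    {a b : A} (hp : ∀ x y, x ⊓ a ≤ y ⊔ b → p (box x) → p (dia y)) :
    ∃ q, (p, q) ∈ canonicalRel box dia ∧ q a ∧ ¬ q b := by
  have hF : Order.IsPFilter {x | p (box x)} := .of_def ⟨⊤, by simp [h.box_top]⟩
    (fun x hx y hy => ⟨x ⊓ y, by simpa [h.box_inf] using ⟨hx, hy⟩, inf_le_left, inf_le_right⟩)
    fun hxy => OrderHomClass.mono p (h.box_mono hxy)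
  have hI : Order.IsIdeal {y | ¬ p (dia y)} :=
    ⟨fun x y hyx hx hy => hx (OrderHomClass.mono p (h.dia_mono hyx) hy), ⟨⊥, by simp [h.dia_bot]⟩,
      fun x hx y hy => ⟨x ⊔ y, by simpa [h.dia_sup] using ⟨hx, hy⟩, le_sup_left, le_sup_right⟩⟩
  obtain ⟨q, hFq, hIq, hqa, hqb⟩ := exists_primeFilter_of_forall_not_inf_le_sup (F := hF.toPFilter)
    (I := hI.toIdeal) (a := a) (b := b) fun x hx y hy hxy => hy (hp x y hxy hx)
  exact ⟨q, ⟨hFq, fun y hqy => by_contra fun hy => hIq y hy hqy⟩, hqa, hqb⟩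

theorem exists_canonicalRel_of_not_box (h : IsPositiveModalAlgebra box dia)
    {p : BoundedLatticeHom A Prop} {a : A} (hp : ¬ p (box a)) :
    ∃ q, (p, q) ∈ canonicalRel box dia ∧ ¬ q a := by
  have hp' (x y : A) (hxy : x ⊓ ⊤ ≤ y ⊔ a) (hx : p (box x)) : p (dia y) := by
    have hle : box x ≤ box a ⊔ dia y := calc
      box x ≤ box (a ⊔ y) := h.box_mono (by simpa [sup_comm] using hxy)
      _ ≤ box a ⊔ dia y := h.box_sup_le a y
    have : p (box a) ∨ p (dia y) := by simpa using OrderHomClass.mono p hle hx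
    exact this.resolve_left hp
  obtain ⟨q, hpq, -, hqa⟩ := h.exists_canonicalRel hp'
  exact ⟨q, hpq, hqa⟩

theorem exists_canonicalRel_of_dia (h : IsPositiveModalAlgebra box dia)
    {p : BoundedLatticeHom A Prop} {a : A} (hp : p (dia a)) :
    ∃ q, (p, q) ∈ canonicalRel box dia ∧ q a := by
  have hp' (x y : A) (hxy : x ⊓ a ≤ y ⊔ ⊥) (hx : p (box x)) : p (dia y) := by
    have hle : box x ⊓ dia a ≤ dia y := calc
      box x ⊓ dia a ≤ dia (x ⊓ a) := h.inf_dia_le x a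
      _ ≤ dia y := h.dia_mono (by simpa using hxy)
    exact OrderHomClass.mono p hle (by simpa using ⟨hx, hp⟩)
  obtain ⟨q, hpq, hqa, -⟩ := h.exists_canonicalRel hp'
  exact ⟨q, hpq, hqa⟩

variable {X : Set (BoundedLatticeHom A Prop)}

theorem stoneHom_box (h : IsPositiveModalAlgebra box dia) (hX : X ⊆ (canonicalRel box dia).core X) :
    Function.Semiconj (stoneHom X) box (canonicalRelOn box dia X).core := by
  intro a
  ext p
  refine ⟨fun hp q hpq => hpq.1 a hp, fun hp => by_contra fun hbox => ?_⟩
  obtain ⟨q, hpq, hqa⟩ := h.exists_canonicalRel_of_not_box hbox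
  exact hqa (hp (b := ⟨q, hX p.2 hpq⟩) hpq)

theorem stoneHom_dia (h : IsPositiveModalAlgebra box dia) (hX : X ⊆ (canonicalRel box dia).core X) :
    Function.Semiconj (stoneHom X) dia (fun S => ((canonicalRelOn box dia X).core Sᶜ)ᶜ) := by
  intro a
  ext p
  refine ⟨fun hp hbox => ?_, fun hp => by_contra fun hdia => hp fun q hpq hqa => ?_⟩
  · obtain ⟨q, hpq, hqa⟩ := h.exists_canonicalRel_of_dia hp
    exact hbox (b := ⟨q, hX p.2 hpq⟩) hpq hqa
  · exact hdia (hpq.2 a hqa)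

theorem isGLDAlgebra_core (h : IsPositiveModalAlgebra box dia)
    (hbox : ∀ x, box x ≤ box (box x)) (hdia : ∀ x, dia (dia x) ≤ dia x) :
    IsGLDAlgebra (canonicalRelOn box dia (finiteDepthFilters box)).core := by
  have := isTrans_canonicalRel hbox hdia
  have : (canonicalRelOn box dia (finiteDepthFilters box)).IsTrans := SetRel.isTrans_preimage
  refine .setRel_core _ fun p => ?_
  obtain ⟨n, hn⟩ := p.2
  have hstone := h.stoneHom_box finiteDepthFilters_subset_core
  refine ⟨n, ?_⟩
  rw [← map_bot (stoneHom (finiteDepthFilters box)), ← (hstone.iterate_right n).eq]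
  exact hn

end IsPositiveModalAlgebra

end CanonicalFrame

theorem stmt10_general {ι : Type*} (φs ψs : ι → PosForm) (φ ψ : PosForm) :
    (∀ (B : Type u) [BooleanAlgebra B], ∀ box : B → B, IsGLDAlgebra box →
      PosForm.SatisfiesQuasiIdentity box (fun x => (box xᶜ)ᶜ) φs ψs φ ψ)
    ↔
    (∀ (A : Type u) [DistribLattice A] [BoundedOrder A], ∀ box dia : A → A,
      IsGLDLattice box dia → PosForm.SatisfiesQuasiIdentity box dia φs ψs φ ψ) := by
  refine ⟨fun H A _ _ box dia h => ?_, fun H B _ box h => H B box _ h.isGLDLattice⟩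
  have hA := h.isPositiveModalAlgebra
  exact (H _ _ (hA.isGLDAlgebra_core h.box_le_box_box h.dia_dia_le)).of_injective
    (stoneHom_finiteDepthFilters_injective h.isLUB_inf_boxIter)
    (hA.stoneHom_box finiteDepthFilters_subset_core)
    (hA.stoneHom_dia finiteDepthFilters_subset_core)

/-- A quasi-identity of positive modal formulas holds in all GLD-algebras
(with `◇x = ¬□¬x`) iff it holds in all GLD-lattices. -/
theorem stmt10 (k : ℕ) (φs ψs : Fin k → PosForm) (φ ψ : PosForm) :
    (∀ (B : Type) [BooleanAlgebra B], ∀ box : B → B, IsGLDAlgebra box →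
      ∀ v : ℕ → B,
        (∀ i : Fin k,
          PosForm.eval box (fun x => (box xᶜ)ᶜ) v (φs i) ≤
            PosForm.eval box (fun x => (box xᶜ)ᶜ) v (ψs i)) →
        PosForm.eval box (fun x => (box xᶜ)ᶜ) v φ ≤
          PosForm.eval box (fun x => (box xᶜ)ᶜ) v ψ)
    ↔
    (∀ (A : Type) [DistribLattice A] [BoundedOrder A], ∀ box dia : A → A,
      IsGLDLattice box dia →
      ∀ v : ℕ → A,
        (∀ i : Fin k,
          PosForm.eval box dia v (φs i) ≤ PosForm.eval box dia v (ψs i)) →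
        PosForm.eval box dia v φ ≤ PosForm.eval box dia v ψ) :=
  stmt10_general φs ψs φ ψ
end

section
/- For positive modal formulas φ, ψ, the following are equivalent: (a) for every GL-algebra A (regarded as a modal distributive lattice via ◇x = ¬□¬x) and every valuation v on A, v(φ) ≤ v(ψ); (b) for every GLD-lattice A and every valuation v on A, v(φ) ≤ v(ψ). -/
/-- A GL-algebra structure on a Boolean algebra `A`, given by the modal
operation `box`. -/
structure IsGLAlgebra {A : Type*} [BooleanAlgebra A] (box : A → A) : Prop where
  box_top : box ⊤ = ⊤
  box_inf : ∀ x y : A, box (x ⊓ y) = box x ⊓ box y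
  loeb : ∀ x : A, box ((box x)ᶜ ⊔ x) ≤ box x

universe u

theorem IsGLAlgebra.monotone_box {B : Type*} [BooleanAlgebra B] {box : B → B}
    (h : IsGLAlgebra box) : Monotone box :=
  Monotone.of_map_inf h.box_inf

/-- The axioms of GLD-lattices other than the approximation of elements from above by the `◇ⁿ⊤`;
these suffice for completeness with respect to frames of finite height. -/
structure IsLowerGLDLattice {A : Type*} [DistribLattice A] [BoundedOrder A]
    (box dia : A → A) : Prop extends IsPositiveModalAlgebra box dia where
  dia_dia_le : ∀ x : A, dia (dia x) ≤ dia x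
  box_le_box_box : ∀ x : A, box x ≤ box (box x)
  isLUB_inf_boxIter : ∀ x : A, IsLUB {y : A | ∃ n : ℕ, y = x ⊓ box^[n] ⊥} x

theorem IsGLDLattice.isLowerGLDLattice {A : Type*} [DistribLattice A] [BoundedOrder A]
    {box dia : A → A} (h : IsGLDLattice box dia) : IsLowerGLDLattice box dia :=
  { h with }

/-! ### Kripke frames -/

/-- The box of the powerset algebra of the Kripke frame `(W, R)`. -/
def kripkeBox {W : Type*} (R : W → W → Prop) (X : Set W) : Set W := {w | ∀ u, R w u → u ∈ X}

/-- The diamond of the powerset algebra of the Kripke frame `(W, R)`. -/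
def kripkeDia {W : Type*} (R : W → W → Prop) (X : Set W) : Set W := {w | ∃ u, R w u ∧ u ∈ X}

/-- Transitive Kripke frames in which every world has finite height, that is, an upper bound on the
lengths of the chains starting there. The heights are encoded by a rank that drops along `R`. -/
structure IsFiniteHeightFrame {W : Type*} (R : W → W → Prop) : Prop where
  trans : ∀ ⦃a b c⦄, R a b → R b c → R a c
  exists_rank : ∃ rank : W → ℕ, ∀ ⦃a b⦄, R a b → rank b < rank a

/-- Validity of the sequent `φ ⊢ ψ` on all transitive frames of finite height. -/
def FiniteHeightFrameValid (φ ψ : PosForm) : Prop :=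
  ∀ (W : Type u) (R : W → W → Prop), IsFiniteHeightFrame R → ∀ v : ℕ → Set W,
    φ.eval (kripkeBox R) (kripkeDia R) v ≤ ψ.eval (kripkeBox R) (kripkeDia R) v

section Kripke

variable {W : Type*} {R : W → W → Prop}

theorem compl_kripkeBox (X : Set W) : (kripkeBox R X)ᶜ = kripkeDia R Xᶜ := by
  ext w
  simp [kripkeBox, kripkeDia]

theorem compl_kripkeBox_compl (X : Set W) : (kripkeBox R Xᶜ)ᶜ = kripkeDia R X := by
  rw [compl_kripkeBox, compl_compl]

theorem kripkeBox_inter (X Y : Set W) : kripkeBox R (X ∩ Y) = kripkeBox R X ∩ kripkeBox R Y := by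
  ext w
  simp only [kripkeBox, Set.mem_inter_iff, Set.mem_ofPred_eq, imp_and, forall_and]

theorem isPositiveModalAlgebra_kripke (R : W → W → Prop) :
    IsPositiveModalAlgebra (kripkeBox R) (kripkeDia R) where
  box_top := Set.eq_univ_of_forall fun _ _ _ => trivial
  dia_bot := Set.eq_empty_of_forall_notMem fun _ ⟨_, _, hu⟩ => hu
  box_sup_le X Y w hw := by
    by_cases hY : w ∈ kripkeDia R Y
    · exact Or.inr hY
    · exact Or.inl fun u hu => (hw u hu).resolve_right fun huY => hY ⟨u, hu, huY⟩
  inf_dia_le X Y := fun w ⟨hX, u, hu, hY⟩ => ⟨u, hu, hX u hu, hY⟩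
  dia_sup X Y := by
    ext w
    simp only [kripkeDia, Set.sup_eq_union, Set.mem_union, Set.mem_ofPred_eq, and_or_left,
      exists_or]
  box_inf := kripkeBox_inter

theorem isGLAlgebra_kripkeBox (hR : IsTrans W R) (hwf : WellFounded (Function.swap R)) :
    IsGLAlgebra (kripkeBox R) where
  box_top := (isPositiveModalAlgebra_kripke R).box_top
  box_inf := kripkeBox_inter
  loeb X w hw u := by
    induction u using hwf.induction with
    | _ u ih =>
      intro hu
      exact (hw u hu).resolve_left fun h => h fun t ht => ih t ht (hR.trans _ _ _ hu ht)

theorem mem_kripkeBox_iterate_bot {rank : W → ℕ} (hrank : ∀ ⦃a b⦄, R a b → rank b < rank a)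
    {n : ℕ} {w : W} (hw : rank w < n) : w ∈ (kripkeBox R)^[n] ⊥ := by
  induction n generalizing w with
  | zero => exact absurd hw (Nat.not_lt_zero _)
  | succ n ih =>
    rw [Function.iterate_succ_apply']
    exact fun u hu => ih ((hrank hu).trans_le (Nat.lt_succ_iff.mp hw))

theorem kripkeDia_iterate_top (n : ℕ) : (kripkeDia R)^[n] ⊤ = ((kripkeBox R)^[n] ⊥)ᶜ := by
  have hcompl : Function.Semiconj compl (kripkeBox R) (kripkeDia R) := compl_kripkeBox
  rw [(hcompl.iterate_right n).eq, compl_bot]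

namespace IsFiniteHeightFrame

theorem isGLAlgebra (hR : IsFiniteHeightFrame R) : IsGLAlgebra (kripkeBox R) := by
  obtain ⟨rank, hrank⟩ := hR.exists_rank
  have hwf : WellFounded (Function.swap R) :=
    Subrelation.wf (fun h => hrank h) (measure rank).wf
  exact isGLAlgebra_kripkeBox ⟨fun _ _ _ hab hbc => hR.trans hab hbc⟩ hwf

theorem exists_mem_kripkeBox_iterate_bot (hR : IsFiniteHeightFrame R) (w : W) :
    ∃ n : ℕ, w ∈ (kripkeBox R)^[n] ⊥ := by
  obtain ⟨rank, hrank⟩ := hR.exists_rank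
  exact ⟨rank w + 1, mem_kripkeBox_iterate_bot hrank (Nat.lt_succ_self _)⟩

theorem isGLDLattice (hR : IsFiniteHeightFrame R) :
    IsGLDLattice (kripkeBox R) (kripkeDia R) :=
  { isPositiveModalAlgebra_kripke R with
    dia_dia_le := fun X w ⟨u, hu, t, ht, htX⟩ => ⟨t, hR.trans hu ht, htX⟩
    box_le_box_box := fun X w hw u hu t ht => hw t (hR.trans hu ht)
    isLUB_inf_boxIter := fun X => by
      refine ⟨?_, fun Y hY w hw => ?_⟩
      · rintro _ ⟨n, rfl⟩
        exact inf_le_left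
      · obtain ⟨n, hn⟩ := hR.exists_mem_kripkeBox_iterate_bot w
        exact hY ⟨n, rfl⟩ ⟨hw, hn⟩
    isGLB_sup_diaIter := fun X => by
      refine ⟨?_, fun Y hY w hw => ?_⟩
      · rintro _ ⟨n, rfl⟩
        exact le_sup_left
      · obtain ⟨n, hn⟩ := hR.exists_mem_kripkeBox_iterate_bot w
        refine (hY ⟨n, rfl⟩ hw).resolve_right ?_
        rw [kripkeDia_iterate_top]
        exact not_not_intro hn }

end IsFiniteHeightFrame

end Kripke

/-! ### Homomorphisms and the evaluation of formulas -/

/-- The values of the arguments of the modal operators occurring in a formula. -/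
def PosForm.modalArgs {A : Type*} [Lattice A] [BoundedOrder A] (box dia : A → A) (v : ℕ → A) :
    PosForm → Set A
  | .var _ => ∅
  | .bot => ∅
  | .top => ∅
  | .or φ ψ => φ.modalArgs box dia v ∪ ψ.modalArgs box dia v
  | .and φ ψ => φ.modalArgs box dia v ∪ ψ.modalArgs box dia v
  | .dia φ => insert (φ.eval box dia v) (φ.modalArgs box dia v)
  | .box φ => insert (φ.eval box dia v) (φ.modalArgs box dia v)

section Eval

variable {A : Type*} [Lattice A] [BoundedOrder A] {box dia : A → A}

theorem PosForm.finite_modalArgs (v : ℕ → A) (χ : PosForm) :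
    (χ.modalArgs box dia v).Finite := by
  induction χ with
  | var | bot | top => exact Set.finite_empty
  | or _ _ ihφ ihψ | and _ _ ihφ ihψ => exact ihφ.union ihψ
  | dia _ ih | box _ ih => exact ih.insert _

theorem PosForm.map_eval {C : Type*} [Lattice C] [BoundedOrder C] {box' dia' : C → C}
    (f : BoundedLatticeHom A C) (v : ℕ → A) (χ : PosForm)
    (hbox : ∀ a ∈ χ.modalArgs box dia v, f (box a) = box' (f a))
    (hdia : ∀ a ∈ χ.modalArgs box dia v, f (dia a) = dia' (f a)) :
    f (χ.eval box dia v) = χ.eval box' dia' (f ∘ v) := by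
  induction χ with
  | var p => rfl
  | bot => exact map_bot f
  | top => exact map_top f
  | or φ ψ ihφ ihψ =>
    simp only [modalArgs, Set.mem_union, or_imp, forall_and] at hbox hdia
    simp only [eval, map_sup, ihφ hbox.1 hdia.1, ihψ hbox.2 hdia.2]
  | and φ ψ ihφ ihψ =>
    simp only [modalArgs, Set.mem_union, or_imp, forall_and] at hbox hdia
    simp only [eval, map_inf, ihφ hbox.1 hdia.1, ihψ hbox.2 hdia.2]
  | dia φ ih =>
    simp only [modalArgs, Set.forall_mem_insert] at hbox hdia
    simp only [eval, hdia.1, ih hbox.2 hdia.2]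
  | box φ ih =>
    simp only [modalArgs, Set.forall_mem_insert] at hbox hdia
    simp only [eval, hbox.1, ih hbox.2 hdia.2]

end Eval

/-! ### Prime filters -/

/-- A prime filter, encoded by its characteristic function: `P x` says that `x` belongs to `P`. -/
abbrev PrimeFilter (A : Type*) [Lattice A] [BoundedOrder A] : Type _ := BoundedLatticeHom A Prop

section PrimeFilter

variable {A : Type*}

namespace PrimeFilter

section Lattice

variable [Lattice A] [BoundedOrder A]

/-- The prime filter complementary to a prime ideal. -/
def ofPrimeIdeal (J : Order.Ideal A) (hJ : J.IsPrime) : PrimeFilter A where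
  toFun x := x ∉ J
  map_sup' _ _ := propext (Order.Ideal.sup_mem_iff.not.trans not_and_or)
  map_inf' _ _ := propext <| (not_congr ⟨hJ.mem_or_mem,
    Or.rec (J.lower inf_le_left) (J.lower inf_le_right)⟩).trans not_or
  map_top' := eq_true hJ.toIsProper.top_notMem
  map_bot' := eq_false (not_not_intro J.bot_mem)

theorem apply_of_le (P : PrimeFilter A) {x y : A} (hxy : x ≤ y) (hx : P x) : P y :=
  OrderHomClass.mono P hxy hx

theorem apply_inf (P : PrimeFilter A) (x y : A) : P (x ⊓ y) ↔ P x ∧ P y :=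
  iff_of_eq (map_inf P x y)

theorem apply_sup (P : PrimeFilter A) (x y : A) : P (x ⊔ y) ↔ P x ∨ P y :=
  iff_of_eq (map_sup P x y)

theorem apply_top (P : PrimeFilter A) : P ⊤ :=
  of_eq_true (map_top P)

theorem not_apply_bot (P : PrimeFilter A) : ¬ P ⊥ :=
  of_eq_false (map_bot P)

theorem infClosed_setOf_apply_box (P : PrimeFilter A) {box : A → A}
    (hbox : ∀ x y, box (x ⊓ y) = box x ⊓ box y) : InfClosed {x | P (box x)} := fun x hx y hy => by
  simpa only [Set.mem_ofPred_eq, hbox, P.apply_inf] using And.intro hx hy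

theorem nonempty_setOf_apply_box (P : PrimeFilter A) {box : A → A} (hbox : box ⊤ = ⊤) :
    {x | P (box x)}.Nonempty :=
  ⟨⊤, by simpa only [Set.mem_ofPred_eq, hbox] using P.apply_top⟩

/-- The homomorphism sending `x` to the set of worlds `w` with `x ∈ pt w`. -/
def truthSet {W : Type*} (pt : W → PrimeFilter A) : BoundedLatticeHom A (Set W) where
  toFun x := {w | pt w x}
  map_sup' x y := Set.ext fun w => (pt w).apply_sup x y
  map_inf' x y := Set.ext fun w => (pt w).apply_inf x y
  map_top' := Set.eq_univ_of_forall fun w => (pt w).apply_top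
  map_bot' := Set.eq_empty_of_forall_notMem fun w => (pt w).not_apply_bot

end Lattice

variable [DistribLattice A] [BoundedOrder A]

theorem exists_of_disjoint {F : Order.PFilter A} {I : Order.Ideal A}
    (h : Disjoint (F : Set A) (I : Set A)) :
    ∃ P : PrimeFilter A, (∀ x ∈ F, P x) ∧ ∀ x ∈ I, ¬ P x := by
  obtain ⟨J, hJ, hIJ, hFJ⟩ := DistribLattice.prime_ideal_of_disjoint_filter_ideal h
  exact ⟨ofPrimeIdeal J hJ, fun x hx => Set.disjoint_left.mp hFJ hx,
    fun x hx => not_not_intro (hIJ hx)⟩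

theorem exists_of_forall_not_inf_le_sup {F I : Set A} (hF : InfClosed F) (hF₀ : F.Nonempty)
    (hI : SupClosed I) (hI₀ : I.Nonempty) {a b : A} (h : ∀ f ∈ F, ∀ i ∈ I, ¬ f ⊓ a ≤ i ⊔ b) :
    ∃ P : PrimeFilter A, (∀ f ∈ F, P f) ∧ (∀ i ∈ I, ¬ P i) ∧ P a ∧ ¬ P b := by
  have hG : Order.IsPFilter {y | ∃ f ∈ F, f ⊓ a ≤ y} := by
    refine .of_def (hF₀.imp fun f hf => ⟨f, hf, inf_le_left⟩) (InfClosed.codirectedOn ?_)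
      fun hxy ⟨f, hf, hfx⟩ => ⟨f, hf, hfx.trans hxy⟩
    rintro x ⟨f, hf, hfx⟩ y ⟨g, hg, hgy⟩
    exact ⟨f ⊓ g, hF hf hg, le_inf ((inf_le_inf_right a inf_le_left).trans hfx)
      ((inf_le_inf_right a inf_le_right).trans hgy)⟩
  have hJ : Order.IsIdeal {y | ∃ i ∈ I, y ≤ i ⊔ b} := by
    refine ⟨fun x y hyx ⟨i, hi, hxi⟩ => ⟨i, hi, hyx.trans hxi⟩,
      hI₀.imp fun i hi => ⟨i, hi, le_sup_left⟩, SupClosed.directedOn ?_⟩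
    rintro x ⟨i, hi, hxi⟩ y ⟨j, hj, hyj⟩
    exact ⟨i ⊔ j, hI hi hj, sup_le (hxi.trans (sup_le_sup_right le_sup_left b))
      (hyj.trans (sup_le_sup_right le_sup_right b))⟩
  have hdisj : Disjoint (hG.toPFilter : Set A) (hJ.toIdeal : Set A) :=
    Set.disjoint_left.mpr fun _ ⟨f, hf, hfx⟩ ⟨i, hi, hxi⟩ => h f hf i hi (hfx.trans hxi)
  obtain ⟨P, hPG, hPJ⟩ := exists_of_disjoint hdisj
  obtain ⟨f, hf⟩ := hF₀
  obtain ⟨i, hi⟩ := hI₀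
  exact ⟨P, fun g hg => hPG g ⟨g, hg, inf_le_left⟩, fun j hj => hPJ j ⟨j, hj, le_sup_left⟩,
    hPG a ⟨f, hf, inf_le_right⟩, hPJ b ⟨i, hi, le_sup_right⟩⟩

theorem le_of_forall_apply_imp {a b : A} (h : ∀ P : PrimeFilter A, P a → P b) : a ≤ b := by
  by_contra hab
  obtain ⟨P, -, -, hPa, hPb⟩ := exists_of_forall_not_inf_le_sup (a := a) (b := b)
    infClosed_singleton (Set.singleton_nonempty (⊤ : A))
    supClosed_singleton (Set.singleton_nonempty (⊥ : A))
    (by rintro _ rfl _ rfl; rwa [top_inf_eq, bot_sup_eq])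
  exact hPb (h P hPa)

end PrimeFilter

end PrimeFilter

/-! ### The canonical frame of a positive modal algebra -/

section Canonical

variable {A : Type u}

/-- Dunn's canonical accessibility relation between prime filters, `□⁻¹P ⊆ Q ⊆ ◇⁻¹P`. -/
def CanonicalRel [Lattice A] [BoundedOrder A] (box dia : A → A) (P Q : PrimeFilter A) : Prop :=
  (∀ x, P (box x) → Q x) ∧ ∀ x, Q x → P (dia x)

variable [DistribLattice A] [BoundedOrder A] {box dia : A → A}

namespace IsPositiveModalAlgebra

theorem exists_canonicalRel_s11 (h : IsPositiveModalAlgebra box dia) {P : PrimeFilter A} {a b : A}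
    (hab : ∀ f i, P (box f) → ¬ P (dia i) → ¬ f ⊓ a ≤ i ⊔ b) :
    ∃ Q, CanonicalRel box dia P Q ∧ Q a ∧ ¬ Q b := by
  have hI : SupClosed {i | ¬ P (dia i)} := fun i hi j hj => by
    simpa only [Set.mem_ofPred_eq, h.dia_sup, P.apply_sup, not_or] using And.intro hi hj
  have hI₀ : {i | ¬ P (dia i)}.Nonempty :=
    ⟨⊥, by simpa only [Set.mem_ofPred_eq, h.dia_bot] using P.not_apply_bot⟩
  obtain ⟨Q, hQF, hQI, hQ⟩ := PrimeFilter.exists_of_forall_not_inf_le_sup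
    (P.infClosed_setOf_apply_box h.box_inf) (P.nonempty_setOf_apply_box h.box_top) hI hI₀
    fun f hf i hi => hab f i hf hi
  exact ⟨Q, ⟨hQF, fun x hx => not_not.mp fun hd => hQI x hd hx⟩, hQ⟩

theorem apply_box_iff (h : IsPositiveModalAlgebra box dia) (P : PrimeFilter A) (x : A) :
    P (box x) ↔ ∀ Q, CanonicalRel box dia P Q → Q x := by
  refine ⟨fun hx Q hPQ => hPQ.1 x hx, fun hx => by_contra fun hbox => ?_⟩
  obtain ⟨Q, hPQ, -, hQx⟩ := h.exists_canonicalRel_s11 (P := P) (a := ⊤) (b := x)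
    fun f i hf hi hle => by
      have hfx : box f ≤ box x ⊔ dia i :=
        (Monotone.of_map_inf h.box_inf (by rwa [inf_top_eq, sup_comm] at hle)).trans
          (h.box_sup_le x i)
      exact ((P.apply_sup _ _).mp (P.apply_of_le hfx hf)).elim hbox hi
  exact hQx (hx Q hPQ)

theorem apply_dia_iff (h : IsPositiveModalAlgebra box dia) (P : PrimeFilter A) (x : A) :
    P (dia x) ↔ ∃ Q, CanonicalRel box dia P Q ∧ Q x := by
  refine ⟨fun hdia => ?_, fun ⟨Q, hPQ, hx⟩ => hPQ.2 x hx⟩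
  obtain ⟨Q, hPQ, hQx, -⟩ := h.exists_canonicalRel_s11 (P := P) (a := x) (b := ⊥)
    fun f i hf hi hle => by
      have hxi : box f ⊓ dia x ≤ dia i :=
        (h.inf_dia_le f x).trans (Monotone.of_map_sup h.dia_sup (by rwa [sup_bot_eq] at hle))
      exact hi (P.apply_of_le hxi ((P.apply_inf _ _).mpr ⟨hf, hdia⟩))
  exact ⟨Q, hPQ, hQx⟩

end IsPositiveModalAlgebra

theorem CanonicalRel.exists_lt_apply_box_iterate_bot {P Q : PrimeFilter A}
    (hPQ : CanonicalRel box dia P Q) {n : ℕ} (hn : P (box^[n] ⊥)) :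
    ∃ m < n, Q (box^[m] ⊥) := by
  cases n with
  | zero => exact absurd hn P.not_apply_bot
  | succ m =>
    rw [Function.iterate_succ_apply'] at hn
    exact ⟨m, Nat.lt_succ_self m, hPQ.1 _ hn⟩

/-- The worlds of finite height in the canonical frame: the prime filters containing some `□ⁿ⊥`. -/
abbrev FiniteHeightFilter (box : A → A) : Type _ :=
  {P : PrimeFilter A // ∃ n : ℕ, P (box^[n] ⊥)}

/-- The restriction of the canonical relation to the prime filters of finite height. -/
def FiniteHeightRel (box dia : A → A) (P Q : FiniteHeightFilter box) : Prop :=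
  CanonicalRel box dia P.1 Q.1

theorem CanonicalRel.exists_finiteHeightRel {P : FiniteHeightFilter box} {Q : PrimeFilter A}
    (hPQ : CanonicalRel box dia P.1 Q) : ∃ Q' : FiniteHeightFilter box,
      FiniteHeightRel box dia P Q' ∧ Q'.1 = Q := by
  obtain ⟨n, hn⟩ := P.2
  obtain ⟨m, -, hm⟩ := hPQ.exists_lt_apply_box_iterate_bot hn
  exact ⟨⟨Q, m, hm⟩, hPQ, rfl⟩

theorem IsPositiveModalAlgebra.truthSet_box (h : IsPositiveModalAlgebra box dia) (x : A) :
    PrimeFilter.truthSet (Subtype.val : FiniteHeightFilter box → _) (box x) =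
      kripkeBox (FiniteHeightRel box dia) (PrimeFilter.truthSet Subtype.val x) := by
  ext P
  refine (h.apply_box_iff P.1 x).trans ⟨fun hx Q hPQ => hx Q.1 hPQ, fun hx Q hPQ => ?_⟩
  obtain ⟨Q', hPQ', rfl⟩ := hPQ.exists_finiteHeightRel
  exact hx Q' hPQ'

theorem IsPositiveModalAlgebra.truthSet_dia (h : IsPositiveModalAlgebra box dia) (x : A) :
    PrimeFilter.truthSet (Subtype.val : FiniteHeightFilter box → _) (dia x) =
      kripkeDia (FiniteHeightRel box dia) (PrimeFilter.truthSet Subtype.val x) := by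
  ext P
  refine (h.apply_dia_iff P.1 x).trans ⟨fun ⟨Q, hPQ, hx⟩ => ?_, fun ⟨Q, hPQ, hx⟩ => ⟨Q.1, hPQ, hx⟩⟩
  obtain ⟨Q', hPQ', rfl⟩ := hPQ.exists_finiteHeightRel
  exact ⟨Q', hPQ', hx⟩

namespace IsLowerGLDLattice

theorem canonicalRel_trans (h : IsLowerGLDLattice box dia) {P Q T : PrimeFilter A}
    (hPQ : CanonicalRel box dia P Q) (hQT : CanonicalRel box dia Q T) :
    CanonicalRel box dia P T :=
  ⟨fun x hx => hQT.1 x (hPQ.1 _ (P.apply_of_le (h.box_le_box_box x) hx)),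
    fun x hx => P.apply_of_le (h.dia_dia_le x) (hPQ.2 _ (hQT.2 x hx))⟩

theorem isFiniteHeightFrame (h : IsLowerGLDLattice box dia) :
    IsFiniteHeightFrame (FiniteHeightRel box dia) := by
  classical
  refine ⟨fun _ _ _ hPQ hQT => h.canonicalRel_trans hPQ hQT, fun P => Nat.find P.2,
    fun P Q hPQ => ?_⟩
  obtain ⟨m, hm, hQm⟩ := hPQ.exists_lt_apply_box_iterate_bot (Nat.find_spec P.2)
  exact (Nat.find_min' Q.2 hQm).trans_lt hm

end IsLowerGLDLattice

theorem FiniteHeightFrameValid.eval_le_of_isLowerGLDLattice {φ ψ : PosForm}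
    (hvalid : FiniteHeightFrameValid.{u} φ ψ) (h : IsLowerGLDLattice box dia) (v : ℕ → A) :
    φ.eval box dia v ≤ ψ.eval box dia v := by
  refine (h.isLUB_inf_boxIter _).2 ?_
  rintro _ ⟨n, rfl⟩
  refine PrimeFilter.le_of_forall_apply_imp fun P hP => ?_
  obtain ⟨hφ, hn⟩ := (P.apply_inf _ _).mp hP
  let f := PrimeFilter.truthSet (Subtype.val : FiniteHeightFilter box → _)
  have hf (χ : PosForm) : f (χ.eval box dia v) = χ.eval _ _ (f ∘ v) :=
    χ.map_eval f v (fun x _ => h.truthSet_box x) (fun x _ => h.truthSet_dia x)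
  have hle : f (φ.eval box dia v) ≤ f (ψ.eval box dia v) := by
    simpa only [hf] using hvalid _ _ h.isFiniteHeightFrame _
  exact @hle ⟨P, n, hn⟩ hφ

end Canonical

/-! ### Solovay's frame of a GL-algebra -/

section Solovay

variable {B : Type u} [BooleanAlgebra B] {box : B → B} {S : Set B}

/-- Solovay's accessibility relation between the ultrafilters of a GL-algebra, relative to a set `S`
of arguments of boxes. -/
def SolovayRel (box : B → B) (S : Set B) (P Q : PrimeFilter B) : Prop :=
  (∀ s ∈ S, P (box s) → Q s ∧ Q (box s)) ∧ ∃ s ∈ S, ¬ P (box s) ∧ Q (box s)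

theorem isFiniteHeightFrame_solovayRel (box : B → B) (hS : S.Finite) :
    IsFiniteHeightFrame (SolovayRel box S) where
  trans P Q T := fun ⟨hPQ, s, hs, hPs, hQs⟩ ⟨hQT, _⟩ =>
    ⟨fun t ht hPt => hQT t ht (hPQ t ht hPt).2, s, hs, hPs, (hQT s hs hQs).2⟩
  exists_rank := by
    refine ⟨fun P => {s ∈ S | ¬ P (box s)}.ncard, fun P Q ⟨hPQ, s, hs, hPs, hQs⟩ => ?_⟩
    have hsub : {t ∈ S | ¬ Q (box t)} ⊂ {t ∈ S | ¬ P (box t)} :=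
      ⟨fun t ⟨ht, hQt⟩ => ⟨ht, fun hPt => hQt (hPQ t ht hPt).2⟩,
        fun hsub => (hsub ⟨hs, hPs⟩).2 hQs⟩
    exact Set.ncard_lt_ncard hsub (hS.sep _)

namespace IsGLAlgebra

theorem box_le_of_inf_box_le (h : IsGLAlgebra box) {x y : B} (hxy : x ⊓ box y ≤ y) :
    box x ≤ box y := by
  rw [← le_himp_iff, himp_eq, sup_comm] at hxy
  exact (h.monotone_box hxy).trans (h.loeb y)

theorem box_le_box_inf_box (h : IsGLAlgebra box) (x : B) : box x ≤ box (x ⊓ box x) :=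
  h.box_le_of_inf_box_le (inf_le_inf_left x (h.monotone_box inf_le_left))

theorem exists_solovayRel (h : IsGLAlgebra box) {P : PrimeFilter B} {s : B} (hs : s ∈ S)
    (hPs : ¬ P (box s)) : ∃ Q, SolovayRel box S P Q ∧ ¬ Q s := by
  obtain ⟨Q, hQ, -, hQbox, hQs⟩ := PrimeFilter.exists_of_forall_not_inf_le_sup
    (a := box s) (b := s)
    (P.infClosed_setOf_apply_box h.box_inf) (P.nonempty_setOf_apply_box h.box_top)
    supClosed_singleton (Set.singleton_nonempty (⊥ : B))
    (by
      rintro x hx _ rfl hle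
      rw [bot_sup_eq] at hle
      exact hPs (P.apply_of_le (h.box_le_of_inf_box_le hle) hx))
  have hstep (t : B) (ht : P (box t)) : Q t ∧ Q (box t) :=
    (Q.apply_inf _ _).mp (hQ _ (P.apply_of_le (h.box_le_box_inf_box t) ht))
  exact ⟨Q, ⟨fun t _ => hstep t, s, hs, hPs, hQbox⟩, hQs⟩

theorem truthSet_box (h : IsGLAlgebra box) {s : B} (hs : s ∈ S) :
    PrimeFilter.truthSet id (box s) = kripkeBox (SolovayRel box S) (PrimeFilter.truthSet id s) := by
  ext P
  refine ⟨fun hP Q hPQ => (hPQ.1 s hs hP).1, fun hP => by_contra fun hPs => ?_⟩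
  obtain ⟨Q, hPQ, hQs⟩ := h.exists_solovayRel hs hPs
  exact hQs (hP Q hPQ)

theorem truthSet_compl_box_compl (h : IsGLAlgebra box) {s : B} (hs : sᶜ ∈ S) :
    PrimeFilter.truthSet id (box sᶜ)ᶜ =
      kripkeDia (SolovayRel box S) (PrimeFilter.truthSet id s) := by
  rw [map_compl', h.truthSet_box hs, map_compl', compl_kripkeBox_compl]

end IsGLAlgebra

theorem FiniteHeightFrameValid.eval_le_of_isGLAlgebra {φ ψ : PosForm}
    (hvalid : FiniteHeightFrameValid.{u} φ ψ) (h : IsGLAlgebra box) (v : ℕ → B) :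
    φ.eval box (fun x => (box xᶜ)ᶜ) v ≤ ψ.eval box (fun x => (box xᶜ)ᶜ) v := by
  let dia (x : B) := (box xᶜ)ᶜ
  let args := φ.modalArgs box dia v ∪ ψ.modalArgs box dia v
  let S := args ∪ compl '' args
  have hargs : args.Finite := (φ.finite_modalArgs v).union (ψ.finite_modalArgs v)
  have hS : S.Finite := hargs.union (hargs.image _)
  let f : BoundedLatticeHom B (Set (PrimeFilter B)) := PrimeFilter.truthSet id
  have hf (χ : PosForm) (hχ : χ.modalArgs box dia v ⊆ args) :
      f (χ.eval box dia v) =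
        χ.eval (kripkeBox (SolovayRel box S)) (kripkeDia (SolovayRel box S)) (f ∘ v) :=
    χ.map_eval f v (fun s hs => h.truthSet_box (Or.inl (hχ hs)))
      (fun s hs => h.truthSet_compl_box_compl (Or.inr (Set.mem_image_of_mem _ (hχ hs))))
  refine PrimeFilter.le_of_forall_apply_imp fun P hP => ?_
  have hle : f (φ.eval box dia v) ≤ f (ψ.eval box dia v) := by
    rw [hf φ Set.subset_union_left, hf ψ Set.subset_union_right]
    exact hvalid _ _ (isFiniteHeightFrame_solovayRel box hS) _
  exact @hle P hP

end Solovay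

theorem stmt11_general (φ ψ : PosForm) :
    List.TFAE [
      ∀ (B : Type u) [BooleanAlgebra B] (box : B → B), IsGLAlgebra box → ∀ v : ℕ → B,
        φ.eval box (fun x => (box xᶜ)ᶜ) v ≤ ψ.eval box (fun x => (box xᶜ)ᶜ) v,
      ∀ (A : Type u) [DistribLattice A] [BoundedOrder A] (box dia : A → A),
        IsGLDLattice box dia → ∀ v : ℕ → A, φ.eval box dia v ≤ ψ.eval box dia v,
      ∀ (A : Type u) [DistribLattice A] [BoundedOrder A] (box dia : A → A),
        IsLowerGLDLattice box dia → ∀ v : ℕ → A, φ.eval box dia v ≤ ψ.eval box dia v,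
      FiniteHeightFrameValid.{u} φ ψ] := by
  tfae_have 1 → 4 := fun hGL W R hR v => by
    simpa only [compl_kripkeBox_compl] using hGL (Set W) (kripkeBox R) hR.isGLAlgebra v
  tfae_have 4 → 3 := fun hvalid A _ _ box dia h v => hvalid.eval_le_of_isLowerGLDLattice h v
  tfae_have 3 → 2 := fun hLower A _ _ box dia h v => hLower A box dia h.isLowerGLDLattice v
  tfae_have 2 → 4 := fun hGLD W R hR v => hGLD (Set W) _ _ hR.isGLDLattice v
  tfae_have 4 → 1 := fun hvalid B _ box h v => hvalid.eval_le_of_isGLAlgebra h v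
  tfae_finish

/-- A sequent of positive modal formulas holds in all GL-algebras (with
`◇x = ¬□¬x`) iff it holds in all GLD-lattices. -/
theorem stmt11 (φ ψ : PosForm) :
    (∀ (B : Type) [BooleanAlgebra B], ∀ box : B → B, IsGLAlgebra box →
      ∀ v : ℕ → B,
        PosForm.eval box (fun x => (box xᶜ)ᶜ) v φ ≤
          PosForm.eval box (fun x => (box xᶜ)ᶜ) v ψ)
    ↔
    (∀ (A : Type) [DistribLattice A] [BoundedOrder A], ∀ box dia : A → A,
      IsGLDLattice box dia →
      ∀ v : ℕ → A, PosForm.eval box dia v φ ≤ PosForm.eval box dia v ψ) :=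
  (stmt11_general φ ψ).out 0 1
end
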